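/- Let T be a regular interval exchange transformation on k intervals and U(x) the coding of the orbit of x ∈ [0,1). Then for every factor w of U(x), the number of distinct return words over w in U(x) is exactly k (property R_k). -/

import Mathlib

/-- `w` occurs in the infinite word `U` at position `i`. -/
def OccursAt {A : Type*} (U : ℕ → A) (w : List A) (i : ℕ) : Prop :=
  ∀ j : Fin w.length, U (i + j) = w.get j

/-- `w` is a factor of the infinite word `U`. -/
def IsFactor {A : Type*} (U : ℕ → A) (w : List A) : Prop := ∃ i, OccursAt U w i

/-- `U` is recurrent: every factor occurs infinitely often. -/
def Recurrent {A : Type*} (U : ℕ → A) : Prop :=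
  ∀ w, IsFactor U w → ∀ N, ∃ i, N ≤ i ∧ OccursAt U w i

/-- The set of return words over `w` in `U`: words starting at an occurrence of `w`
and ending just before the next occurrence. -/
def ReturnWords {A : Type*} (U : ℕ → A) (w : List A) : Set (List A) :=
  {r | ∃ i j, OccursAt U w i ∧ OccursAt U w j ∧ i < j ∧
      (∀ t, i < t → t < j → ¬ OccursAt U w t) ∧
      r = List.ofFn (fun t : Fin (j - i) => U (i + t))}

/-- The complexity function: number of distinct factors of length `n`. -/
noncomputable def Complexity {A : Type*} (U : ℕ → A) (n : ℕ) : ℕ :=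
  Set.ncard {w : List A | w.length = n ∧ IsFactor U w}

open Set

/-- Left endpoint of the `i`-th interval: `∑_{j<i} λ_j`. -/
noncomputable def leftPt {k : ℕ} (lam : Fin k → ℝ) (i : Fin k) : ℝ :=
  ∑ j ∈ Finset.univ.filter (fun j => j < i), lam j

/-- The `i`-th exchanged interval `X_i = [∑_{j<i} λ_j, ∑_{j≤i} λ_j)`. -/
def Xint {k : ℕ} (lam : Fin k → ℝ) (i : Fin k) : Set ℝ :=
  Set.Ico (leftPt lam i) (leftPt lam i + lam i)

/-- The translation amount `a_i = ∑_{ℓ<σ⁻¹(i)} λ_{σ(ℓ)} − ∑_{ℓ<i} λ_ℓ`. -/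
noncomputable def transAmt {k : ℕ} (lam : Fin k → ℝ) (σ : Equiv.Perm (Fin k)) (i : Fin k) : ℝ :=
  (∑ j ∈ Finset.univ.filter (fun j => j < σ.symm i), lam (σ j)) - leftPt lam i

/-- `T` is the interval exchange transformation on `[0,1)` with data `(lam, σ)`
(extended by the identity outside `[0,1)`). -/
def IsIET {k : ℕ} (lam : Fin k → ℝ) (σ : Equiv.Perm (Fin k)) (T : ℝ → ℝ) : Prop :=
  (∀ i, 0 < lam i) ∧ (∑ i, lam i = 1) ∧
  (∀ i, ∀ x ∈ Xint lam i, T x = x + transAmt lam σ i) ∧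
  (∀ x, x ∉ Set.Ico (0:ℝ) 1 → T x = x)

/-- Keane's regularity condition: `T^n a_i = a_j` for interior endpoints forces `n = 0, i = j`
(stated symmetrically in `i, j`, which covers negative powers of the bijection `T`). -/
def KeaneRegular {k : ℕ} (lam : Fin k → ℝ) (T : ℝ → ℝ) : Prop :=
  ∀ n : ℕ, ∀ i j : Fin k, (i : ℕ) ≠ 0 → (j : ℕ) ≠ 0 →
    T^[n] (leftPt lam i) = leftPt lam j → n = 0 ∧ i = j

/-- `U` is the symbolic coding of the `T`-orbit of `x`: `U n = i` iff `T^n x ∈ X_i`. -/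
def IsCoding {k : ℕ} (lam : Fin k → ℝ) (T : ℝ → ℝ) (x : ℝ) (U : ℕ → Fin k) : Prop :=
  ∀ n, T^[n] x ∈ Xint lam (U n)

/-- `T` is an injective self-map of `[0,1)` which acts as a translation between any two points
not separated by an element of the finite set `D`. -/
structure IsPiecewiseTranslation (T : ℝ → ℝ) (D : Finset ℝ) : Prop where
  mapsTo : MapsTo T (Ico 0 1) (Ico 0 1)
  injOn : InjOn T (Ico 0 1)
  trans : ∀ x ∈ Ico (0:ℝ) 1, ∀ y ∈ Ico (0:ℝ) 1, x ≤ y →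
    (∀ d ∈ D, ¬ (x < d ∧ d ≤ y)) → T y = T x + (y - x)

/-- No point of `(x, y]` reaches `D` in fewer than `m` steps. -/
def NoCut (T : ℝ → ℝ) (D : Finset ℝ) (m : ℕ) (x y : ℝ) : Prop :=
  ∀ z, x < z → z ≤ y → ∀ n < m, T^[n] z ∉ D

theorem NoCut.mono {T : ℝ → ℝ} {D : Finset ℝ} {m n : ℕ} {x y x' y' : ℝ}
    (h : NoCut T D m x y) (hn : n ≤ m) (hx : x ≤ x') (hy : y' ≤ y) : NoCut T D n x' y' :=
  fun z h1 h2 t ht => h z (hx.trans_lt h1) (h2.trans hy) t (ht.trans_le hn)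

theorem Set.Finite.exists_gap {F : Set ℝ} (hF : F.Finite) (p : ℝ) :
    ∃ ε > 0, ∀ z ∈ F, z ≠ p → ε ≤ |z - p| := by
  have hc : IsClosed (F \ {p}) := (hF.subset sdiff_subset).isClosed
  have hm : (F \ {p})ᶜ ∈ nhds p := hc.isOpen_compl.mem_nhds (by simp)
  obtain ⟨ε, hε, h⟩ := Metric.mem_nhds_iff.1 hm
  refine ⟨ε, hε, fun z hz hzp => ?_⟩
  by_contra! hlt
  exact h (show z ∈ Metric.ball p ε by rwa [Metric.mem_ball, Real.dist_eq]) ⟨hz, hzp⟩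

namespace IsPiecewiseTranslation

variable {T : ℝ → ℝ} {D : Finset ℝ}

theorem iterate_mem (h : IsPiecewiseTranslation T D) {x : ℝ} (hx : x ∈ Ico (0:ℝ) 1) (n : ℕ) :
    T^[n] x ∈ Ico (0:ℝ) 1 :=
  h.mapsTo.iterate n hx

theorem iterate_injOn (h : IsPiecewiseTranslation T D) (n : ℕ) : InjOn T^[n] (Ico 0 1) :=
  h.injOn.iterate h.mapsTo n

theorem eq_iterate_sub (h : IsPiecewiseTranslation T D) {x y : ℝ} (hx : x ∈ Ico (0:ℝ) 1)
    (hy : y ∈ Ico (0:ℝ) 1) {m n : ℕ} (hmn : m ≤ n) (he : T^[m] x = T^[n] y) :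
    x = T^[n - m] y := by
  refine h.iterate_injOn m hx (h.iterate_mem hy _) ?_
  rw [he, ← Function.iterate_add_apply, Nat.add_sub_cancel' hmn]

theorem mono (h : IsPiecewiseTranslation T D) {D' : Finset ℝ} (hD : D ⊆ D') :
    IsPiecewiseTranslation T D' :=
  ⟨h.mapsTo, h.injOn, fun x hx y hy hxy hd => h.trans x hx y hy hxy fun d hdD => hd d (hD hdD)⟩

theorem iterate_trans (h : IsPiecewiseTranslation T D) {x : ℝ} (hx : x ∈ Ico (0:ℝ) 1) {m : ℕ} :
    ∀ {y : ℝ}, y ∈ Ico (0:ℝ) 1 → x ≤ y → NoCut T D m x y → T^[m] y = T^[m] x + (y - x) := by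
  induction m with
  | zero => intro y _ _ _; simp
  | succ m ih =>
    intro y hy hxy hc
    have hm := ih hy hxy (hc.mono (Nat.le_succ m) le_rfl le_rfl)
    rw [Function.iterate_succ_apply', Function.iterate_succ_apply']
    rw [h.trans _ (h.iterate_mem hx m) _ (h.iterate_mem hy m) (by linarith), hm]
    · ring
    · rintro d hd ⟨h1, h2⟩
      have hz1 : x < x + (d - T^[m] x) := by linarith
      have hz2 : x + (d - T^[m] x) ≤ y := by linarith
      have hz := ih (y := x + (d - T^[m] x)) ⟨hx.1.trans hz1.le, hz2.trans_lt hy.2⟩ hz1.le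
        (hc.mono (Nat.le_succ m) le_rfl hz2)
      refine hc _ hz1 hz2 m (Nat.lt_succ_self m) ?_
      rw [hz]
      simpa using hd

theorem not_separated (h : IsPiecewiseTranslation T D) {x y : ℝ} (hx : x ∈ Ico (0:ℝ) 1)
    (hy : y ∈ Ico (0:ℝ) 1) (hxy : x ≤ y) {m n : ℕ} (hc : NoCut T D m x y) (hn : n < m)
    {d : ℝ} (hd : d ∈ D) : ¬ (T^[n] x < d ∧ d ≤ T^[n] y) := by
  rintro ⟨h1, h2⟩
  have hyn := h.iterate_trans hx hy hxy (hc.mono hn.le le_rfl le_rfl)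
  have hz1 : x < x + (d - T^[n] x) := by linarith
  have hz2 : x + (d - T^[n] x) ≤ y := by linarith
  have hz := h.iterate_trans (y := x + (d - T^[n] x)) hx
    ⟨hx.1.trans hz1.le, hz2.trans_lt hy.2⟩ hz1.le (hc.mono hn.le le_rfl hz2)
  refine hc _ hz1 hz2 n hn ?_
  rw [hz]
  simpa using hd

theorem iterate_mem_Ico_iff (h : IsPiecewiseTranslation T D) {x y : ℝ} (hx : x ∈ Ico (0:ℝ) 1)
    (hy : y ∈ Ico (0:ℝ) 1) (hxy : x ≤ y) {m n : ℕ} (hc : NoCut T D m x y) (hn : n < m)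
    {a b : ℝ} (ha : a ∈ D) (hb : b ∈ D) : T^[n] x ∈ Ico a b ↔ T^[n] y ∈ Ico a b := by
  have hyn := h.iterate_trans hx hy hxy (hc.mono hn.le le_rfl le_rfl)
  have h1 := h.not_separated hx hy hxy hc hn ha
  have h2 := h.not_separated hx hy hxy hc hn hb
  have hle : T^[n] x ≤ T^[n] y := by linarith
  simp only [mem_Ico]
  grind

theorem finite_cuts (h : IsPiecewiseTranslation T D) (m : ℕ) :
    {z | z ∈ Ico (0:ℝ) 1 ∧ ∃ n < m, T^[n] z ∈ D}.Finite := by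
  have hf : (⋃ n ∈ Iio m, {z | z ∈ Ico (0:ℝ) 1 ∧ T^[n] z ∈ D}).Finite := by
    refine (Set.finite_Iio m).biUnion fun n _ => ?_
    exact Set.Finite.of_injOn (f := T^[n]) (t := (D : Set ℝ)) (fun z hz => hz.2)
      ((h.iterate_injOn n).mono fun z hz => hz.1) D.finite_toSet
  refine hf.subset ?_
  rintro z ⟨hz, n, hn, hd⟩
  simp only [mem_iUnion]
  exact ⟨n, hn, hz, hd⟩

/-- Points sufficiently close to the right of `p` have the same itinerary as `p`. -/
theorem exists_noCut_right (h : IsPiecewiseTranslation T D) (m : ℕ) {p : ℝ}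
    (hp : p ∈ Ico (0:ℝ) 1) : ∃ q, p < q ∧ q ≤ 1 ∧ ∀ y, y < q → NoCut T D m p y := by
  obtain ⟨ε, hε, hgap⟩ := (h.finite_cuts m).exists_gap p
  refine ⟨min 1 (p + ε), lt_min hp.2 (by linarith), min_le_left _ _, fun y hy z h1 h2 n hn hd => ?_⟩
  have hy1 := hy.trans_le (min_le_left _ _)
  have hy2 := hy.trans_le (min_le_right _ _)
  have := hgap z ⟨⟨hp.1.trans h1.le, by linarith⟩, n, hn, hd⟩ h1.ne'
  rw [abs_of_pos (by linarith)] at this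
  linarith

/-- If `p` does not reach `D`, points sufficiently close to the left of `p` have the same
itinerary as `p`. -/
theorem exists_noCut_left (h : IsPiecewiseTranslation T D) (m : ℕ) {p : ℝ}
    (hp : p ∈ Ico (0:ℝ) 1) (hp0 : 0 < p) (hD : ∀ n < m, T^[n] p ∉ D) :
    ∃ q, 0 ≤ q ∧ q < p ∧ NoCut T D m q p := by
  obtain ⟨ε, hε, hgap⟩ := (h.finite_cuts m).exists_gap p
  refine ⟨max 0 (p - ε), le_max_left _ _, max_lt hp0 (by linarith), fun z h1 h2 n hn hd => ?_⟩
  rcases h2.eq_or_lt with rfl | h2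
  · exact hD n hn hd
  have hz1 := (le_max_left _ _).trans_lt h1
  have hz2 := (le_max_right _ _).trans_lt h1
  have := hgap z ⟨⟨hz1.le, by linarith [hp.2]⟩, n, hn, hd⟩ h2.ne
  rw [abs_of_neg (by linarith)] at this
  linarith

/-- An orbit in `[0,1)` cannot be uniformly separated. -/
theorem exists_close (h : IsPiecewiseTranslation T D) {c : ℝ} (hc : c ∈ Ico (0:ℝ) 1) {ε : ℝ}
    (hε : 0 < ε) : ∃ m n, m < n ∧ |T^[m] c - T^[n] c| < ε := by
  let f : ℕ → Finset.range (⌊1 / ε⌋₊ + 1) := fun n => ⟨⌊T^[n] c / ε⌋₊, by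
    rw [Finset.mem_range, Nat.lt_succ_iff]
    exact Nat.floor_le_floor (div_le_div_of_nonneg_right (h.iterate_mem hc n).2.le hε.le)⟩
  obtain ⟨m, n, hmn, he⟩ := Finite.exists_ne_map_eq_of_infinite f
  have he' : ⌊T^[m] c / ε⌋₊ = ⌊T^[n] c / ε⌋₊ := congrArg Subtype.val he
  have key : |T^[m] c - T^[n] c| < ε := by
    have h1 := Nat.floor_le (div_nonneg (h.iterate_mem hc m).1 hε.le)
    have h2 := Nat.floor_le (div_nonneg (h.iterate_mem hc n).1 hε.le)
    have h3 := Nat.lt_floor_add_one (T^[m] c / ε)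
    have h4 := Nat.lt_floor_add_one (T^[n] c / ε)
    rw [he'] at h1 h3
    have h5 : |T^[m] c / ε - T^[n] c / ε| < 1 := by
      rw [abs_lt]; constructor <;> linarith
    rwa [← sub_div, abs_div, abs_of_pos hε, div_lt_one hε] at h5
  rcases lt_or_gt_of_ne hmn with hlt | hlt
  · exact ⟨m, n, hlt, key⟩
  · exact ⟨n, m, hlt, by rwa [abs_sub_comm]⟩

/-- Points of `[a, b)` from which `D` can be reached before coming back to `[a, b)`. -/
def returnCuts (T : ℝ → ℝ) (D : Finset ℝ) (a b : ℝ) : Set ℝ :=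
  {c | c ∈ Ico a b ∧ ∃ m, T^[m] c ∈ D ∧ ∀ t, 1 ≤ t → t < m → T^[t] c ∉ Ico a b}

theorem finite_returnCuts (h : IsPiecewiseTranslation T D) {a b : ℝ} (ha : 0 ≤ a) (hb : b ≤ 1) :
    (returnCuts T D a b).Finite := by
  have hsub : ∀ z ∈ Ico a b, z ∈ Ico (0:ℝ) 1 := fun z hz => ⟨ha.trans hz.1, hz.2.trans_le hb⟩
  have hC : ∀ c : {c | c ∈ Ico a b ∧ ∃ m, 1 ≤ m ∧ T^[m] c ∈ D ∧
      ∀ t, 1 ≤ t → t < m → T^[t] c ∉ Ico a b}, ∃ m, 1 ≤ m ∧ T^[m] (c : ℝ) ∈ D ∧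
      ∀ t, 1 ≤ t → t < m → T^[t] (c : ℝ) ∉ Ico a b := fun c => c.2.2
  choose m hm1 hmD hmt using hC
  have hfin : {c | c ∈ Ico a b ∧ ∃ m, 1 ≤ m ∧ T^[m] c ∈ D ∧
      ∀ t, 1 ≤ t → t < m → T^[t] c ∉ Ico a b}.Finite := by
    rw [← Set.finite_coe_iff]
    refine Finite.of_injective (β := D) (fun c => ⟨T^[m c] c, hmD c⟩) fun c c' he => ?_
    have he : T^[m c] (c : ℝ) = T^[m c'] (c' : ℝ) := congrArg Subtype.val he
    have key : ∀ c c', m c ≤ m c' → T^[m c] (c : ℝ) = T^[m c'] (c' : ℝ) → c = c' := by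
      intro c c' hle he
      have h1 := h.eq_iterate_sub (hsub _ c.2.1) (hsub _ c'.2.1) hle he
      rcases Nat.eq_zero_or_pos (m c' - m c) with h0 | h0
      · rw [h0] at h1
        exact Subtype.ext h1
      · exact absurd (h1 ▸ c.2.1) (hmt c' _ h0 (by have := hm1 c; omega))
    rcases le_total (m c) (m c') with hle | hle
    · exact key c c' hle he
    · exact (key c' c hle he.symm).symm
  refine (hfin.union D.finite_toSet).subset ?_
  rintro c ⟨hc, n, hnD, hnt⟩
  rcases Nat.eq_zero_or_pos n with rfl | hn
  · exact Or.inr hnD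
  · exact Or.inl ⟨hc, n, hn, hnD, hnt⟩

theorem noCut_of_returnCuts (h : IsPiecewiseTranslation T D) {a b : ℝ} (ha : 0 ≤ a) (hb : b ≤ 1)
    (haD : a ∈ D) (hbD : b ∈ D) {c y : ℝ} (hc : c ∈ Ico a b) (hy : y < b) 
    (hC : ∀ z ∈ returnCuts T D a b, ¬ (c < z ∧ z ≤ y)) {n : ℕ}
    (hn : ∀ t, 1 ≤ t → t < n → T^[t] c ∉ Ico a b) : NoCut T D (n + 1) c y := by
  have hsub : ∀ z ∈ Ico a b, z ∈ Ico (0:ℝ) 1 := fun z hz => ⟨ha.trans hz.1, hz.2.trans_le hb⟩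
  induction n with
  | zero =>
    intro z h1 h2 t ht hd
    obtain rfl : t = 0 := by omega
    exact hC z ⟨⟨hc.1.trans h1.le, h2.trans_lt hy⟩, 0, hd, by omega⟩ ⟨h1, h2⟩
  | succ n ih =>
    have ih := ih fun t h1 h2 => hn t h1 (by omega)
    intro z h1 h2 t ht hd
    have hz : z ∈ Ico a b := ⟨hc.1.trans h1.le, h2.trans_lt hy⟩
    rcases Nat.lt_succ_iff_lt_or_eq.1 ht with ht | rfl
    · exact ih z h1 h2 t ht hd
    refine hC z ⟨hz, n + 1, hd, fun s hs1 hs2 hs => ?_⟩ ⟨h1, h2⟩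
    exact hn s hs1 hs2 ((h.iterate_mem_Ico_iff (hsub c hc) (hsub z hz) h1.le
      (ih.mono le_rfl le_rfl h2) hs2 haD hbD).2 hs)

theorem exists_return (h : IsPiecewiseTranslation T D) {a b : ℝ} (ha : 0 ≤ a) (hb : b ≤ 1)
    (haD : a ∈ D) (hbD : b ∈ D) {c : ℝ} (hc : c ∈ Ico a b) :
    ∃ n, 1 ≤ n ∧ T^[n] c ∈ Ico a b := by
  have hsub : ∀ z ∈ Ico a b, z ∈ Ico (0:ℝ) 1 := fun z hz => ⟨ha.trans hz.1, hz.2.trans_le hb⟩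
  by_contra! hno
  obtain ⟨ε, hε, hgap⟩ := (h.finite_returnCuts ha hb).exists_gap c
  set δ := min ε (b - c) with hδ
  have hδ0 : 0 < δ := lt_min hε (by linarith [hc.2])
  have hδε : δ ≤ ε := min_le_left _ _
  have hδb : δ ≤ b - c := min_le_right _ _
  have hcut : ∀ y, y < c + δ → ∀ n, NoCut T D (n + 1) c y := fun y hy n =>
    h.noCut_of_returnCuts ha hb haD hbD hc (by linarith) (fun z hz hzc => by
      have := hgap z hz hzc.1.ne'
      rw [abs_of_pos (by linarith)] at this
      linarith) fun t ht _ => hno t ht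
  have htr : ∀ s, 0 ≤ s → s < δ → ∀ n, c + s ∈ Ico a b ∧ T^[n] (c + s) = T^[n] c + s ∧
      (1 ≤ n → T^[n] (c + s) ∉ Ico a b) := by
    intro s hs0 hs n
    have hmem : c + s ∈ Ico a b := ⟨by linarith [hc.1], by linarith⟩
    have hcs := hcut (c + s) (by linarith) n
    refine ⟨hmem, ?_, fun hn hin => hno n hn ?_⟩
    · rw [h.iterate_trans (hsub c hc) (hsub _ hmem) (by linarith)
        (hcs.mono (Nat.le_succ n) le_rfl le_rfl)]
      ring
    · exact (h.iterate_mem_Ico_iff (hsub c hc) (hsub _ hmem) (by linarith) hcs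
        (Nat.lt_succ_self n) haD hbD).2 hin
  obtain ⟨m, n, hmn, hlt⟩ := h.exists_close (hsub c hc) hδ0
  rw [abs_lt] at hlt
  rcases le_total (T^[m] c) (T^[n] c) with hle | hle
  · obtain ⟨h1, h2, -⟩ := htr (T^[n] c - T^[m] c) (by linarith) (by linarith) m
    have := h.eq_iterate_sub (hsub _ h1) (hsub c hc) hmn.le (by rw [h2]; ring)
    exact hno (n - m) (by omega) (this ▸ h1)
  · obtain ⟨h1, h2, -⟩ := htr (T^[m] c - T^[n] c) (by linarith) (by linarith) n
    have := h.eq_iterate_sub (hsub c hc) (hsub _ h1) hmn.le (by rw [h2]; ring)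
    exact (htr (T^[m] c - T^[n] c) (by linarith) (by linarith) (n - m)).2.2 (by omega)
      (this ▸ hc)

theorem recurrent (h : IsPiecewiseTranslation T D) {a b : ℝ} (ha : 0 ≤ a) (hb : b ≤ 1) :
    ∃ N, ∀ y ∈ Ico a b, ∃ n, 1 ≤ n ∧ n ≤ N ∧ T^[n] y ∈ Ico a b := by
  have hsub : ∀ z ∈ Ico a b, z ∈ Ico (0:ℝ) 1 := fun z hz => ⟨ha.trans hz.1, hz.2.trans_le hb⟩
  replace h := h.mono (D' := insert a (insert b D)) (by intro d hd; simp [hd])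
  have haD : a ∈ insert a (insert b D) := by simp
  have hbD : b ∈ insert a (insert b D) := by simp
  generalize insert a (insert b D) = D' at h haD hbD
  have hfin := h.finite_returnCuts ha hb
  have hn : ∀ c, ∃ n, c ∈ Ico a b → 1 ≤ n ∧ T^[n] c ∈ Ico a b ∧
      ∀ t, 1 ≤ t → t < n → T^[t] c ∉ Ico a b := by
    classical
    intro c
    by_cases hc : c ∈ Ico a b
    · have hex := h.exists_return ha hb haD hbD hc
      refine ⟨Nat.find hex, fun _ => ⟨(Nat.find_spec hex).1, (Nat.find_spec hex).2, ?_⟩⟩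
      intro t ht1 ht hin
      exact Nat.find_min hex ht ⟨ht1, hin⟩
    · exact ⟨0, fun hc' => absurd hc' hc⟩
  choose r hr using hn
  obtain ⟨N, hN⟩ := (hfin.image r).bddAbove
  refine ⟨N, fun y hy => ?_⟩
  have hne : (returnCuts T D' a b ∩ Iic y).Nonempty :=
    ⟨a, ⟨⟨le_rfl, hy.1.trans_lt hy.2⟩, 0, haD, by omega⟩, hy.1⟩
  obtain ⟨c, ⟨hcC, hcy⟩, hmax⟩ := (hfin.inter_of_left (Iic y)).exists_maximal hne
  have hc := hcC.1
  obtain ⟨h1, h2, h3⟩ := hr c hc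
  refine ⟨r c, h1, hN ⟨c, hcC, rfl⟩, ?_⟩
  refine (h.iterate_mem_Ico_iff (hsub c hc) (hsub y hy) hcy (h.noCut_of_returnCuts ha hb haD hbD
    hc hy.2 (fun z hz hzc => ?_) h3) (Nat.lt_succ_self _) haD hbD).1 h2
  exact absurd (hmax ⟨hz, hzc.2⟩ hzc.1.le) (not_le.2 hzc.1)

end IsPiecewiseTranslation

theorem Set.Finite.exists_jump {F : Set ℝ} (hF : F.Finite) {P : ℝ → Prop}
    (hP : ∀ x ∈ Ico (0:ℝ) 1, ∀ y ∈ Ico (0:ℝ) 1, x ≤ y → (∀ z ∈ F, ¬ (x < z ∧ z ≤ y)) →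
      (P x ↔ P y)) {x y : ℝ} (hx : x ∈ Ico (0:ℝ) 1) (hy : y ∈ Ico (0:ℝ) 1) (hxy : x ≤ y)
    (hne : ¬ (P x ↔ P y)) :
    ∃ p ∈ F, x < p ∧ p ≤ y ∧ ∀ t, x ≤ t → t < p → ¬ (P t ↔ P p) := by
  have hlast : ∀ t, x ≤ t → t ≤ y → ¬ (P x ↔ P t) → ∃ q ∈ F, x < q ∧ q ≤ t ∧ (P q ↔ P t) := by
    intro t hxt hty hnt
    have ht : t ∈ Ico (0:ℝ) 1 := ⟨hx.1.trans hxt, hty.trans_lt hy.2⟩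
    have hne : (F ∩ Ioc x t).Nonempty := by
      by_contra hemp
      exact hnt (hP x hx t ht hxt fun z hz hzt => hemp ⟨z, hz, hzt⟩)
    obtain ⟨q, ⟨hqF, hxq, hqt⟩, hmax⟩ := (hF.inter_of_left (Ioc x t)).exists_maximal hne
    refine ⟨q, hqF, hxq, hqt, hP q ⟨hx.1.trans hxq.le, hqt.trans_lt ht.2⟩ t ht hqt fun z hz hzt => ?_⟩
    exact absurd (hmax ⟨hz, hxq.trans hzt.1, hzt.2⟩ hzt.1.le) (not_le.2 hzt.1)
  obtain ⟨q, hqF, hxq, hqy, hq⟩ := hlast y hxy le_rfl hne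
  obtain ⟨p, ⟨hpF, ⟨hxp, hpy⟩, hp⟩, hmin⟩ :=
    (hF.inter_of_left {z | z ∈ Ioc x y ∧ ¬ (P x ↔ P z)}).exists_minimal
      ⟨q, hqF, ⟨hxq, hqy⟩, by rwa [hq]⟩
  refine ⟨p, hpF, hxp, hpy, fun t hxt htp htP => ?_⟩
  obtain ⟨r, hrF, hxr, hrt, hr⟩ := hlast t hxt (htp.le.trans hpy) (by rwa [htP])
  exact absurd (hmin ⟨hrF, ⟨hxr, hrt.trans (htp.le.trans hpy)⟩, by rwa [hr, htP]⟩
    (hrt.trans htp.le)) (not_le.2 (hrt.trans_lt htp))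

/-- `p` is a point where the truth value of `P` differs from its value just to the left. -/
def IsJump (P : ℝ → Prop) (p : ℝ) : Prop :=
  p ∈ Ico (0:ℝ) 1 ∧ ∃ q, 0 ≤ q ∧ q < p ∧ ∀ t, q ≤ t → t < p → ¬ (P t ↔ P p)

namespace IsPiecewiseTranslation

variable {T S : ℝ → ℝ} {D D' : Finset ℝ}

theorem isJump_apply (h : IsPiecewiseTranslation T D) {P : ℝ → Prop}
    (hP : ∀ x ∈ Ico (0:ℝ) 1, (P (T x) ↔ P x)) {p : ℝ} (hp : IsJump P p) (hpD : p ∉ D) :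
    IsJump P (T p) := by
  obtain ⟨hpI, q, hq0, hqp, hq⟩ := hp
  obtain ⟨q', hq'0, hq'p, hq'⟩ := h.exists_noCut_left 1 hpI (hq0.trans_lt hqp) (by
    intro n hn
    obtain rfl : n = 0 := by omega
    exact hpD)
  have hm : max q q' < p := max_lt hqp hq'p
  have htr : ∀ t, max q q' ≤ t → t < p → t ∈ Ico (0:ℝ) 1 ∧ T p = T t + (p - t) := by
    intro t ht1 ht2
    have ht : t ∈ Ico (0:ℝ) 1 :=
      ⟨hq0.trans ((le_max_left _ _).trans ht1), ht2.trans hpI.2⟩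
    exact ⟨ht, h.iterate_trans (m := 1) ht hpI ht2.le
      (hq'.mono le_rfl ((le_max_right _ _).trans ht1) le_rfl)⟩
  obtain ⟨hm1, hm2⟩ := htr _ le_rfl hm
  have hTm := h.mapsTo hm1
  refine ⟨h.mapsTo hpI, T (max q q'), hTm.1, by linarith, fun t ht1 ht2 => ?_⟩
  obtain ⟨h1, h2⟩ := htr (p - (T p - t)) (by linarith) (by linarith)
  have h3 : T (p - (T p - t)) = t := by linarith
  rw [← h3, hP _ h1, hP _ hpI]
  exact hq _ ((le_max_left q q').trans (by linarith)) (by linarith)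

/-- Without connections, there are no periodic points. -/
theorem not_periodic (h : IsPiecewiseTranslation T D) (hD : ∀ d ∈ D, ∀ n, 1 ≤ n → T^[n] d ∉ D) (h0 : ∀ n, 1 ≤ n → T^[n] 0 ≠ 0)
    {p : ℝ} (hp : p ∈ Ico (0:ℝ) 1) {r : ℕ} (hr : 1 ≤ r) : T^[r] p ≠ p := by
  intro hper
  have hfin : (insert 0 {z | z ∈ Ico (0:ℝ) 1 ∧ ∃ n < r, T^[n] z ∈ D}).Finite :=
    (h.finite_cuts r).insert 0
  obtain ⟨c, ⟨hc, hcp⟩, hmax⟩ := (hfin.inter_of_left (Iic p)).exists_maximal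
    ⟨0, mem_insert _ _, hp.1⟩
  rw [mem_Iic] at hcp
  have hcI : c ∈ Ico (0:ℝ) 1 := by
    rcases hc with rfl | hc
    · exact ⟨le_rfl, zero_lt_one⟩
    · exact hc.1
  have hcut : NoCut T D r c p := fun z hz1 hz2 n hn hd =>
    absurd (hmax ⟨Or.inr ⟨⟨hcI.1.trans hz1.le, hz2.trans_lt hp.2⟩, n, hn, hd⟩, hz2⟩ hz1.le)
      (not_le.2 hz1)
  have hcr : T^[r] c = c := by
    have := h.iterate_trans hcI hp hcp hcut
    linarith
  rcases hc with rfl | ⟨-, n, -, hn⟩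
  · exact h0 r hr hcr
  · refine hD _ hn r hr ?_
    rwa [← Function.iterate_add_apply, Nat.add_comm, Function.iterate_add_apply, hcr]

theorem iterate_injective (h : IsPiecewiseTranslation T D)
    (hper : ∀ p ∈ Ico (0:ℝ) 1, ∀ n, 1 ≤ n → T^[n] p ≠ p) {p : ℝ} (hp : p ∈ Ico (0:ℝ) 1) :
    Function.Injective fun n => T^[n] p := by
  have key : ∀ m n, m < n → T^[m] p ≠ T^[n] p := fun m n hmn he =>
    hper p hp (n - m) (by omega) (h.eq_iterate_sub hp hp hmn.le he).symm
  intro m n he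
  rcases lt_trichotomy m n with hlt | heq | hlt
  · exact absurd he (key m n hlt)
  · exact heq
  · exact absurd he.symm (key n m hlt)

theorem exists_iterate_mem (h : IsPiecewiseTranslation T D)
    (hper : ∀ p ∈ Ico (0:ℝ) 1, ∀ n, 1 ≤ n → T^[n] p ≠ p) {P : ℝ → Prop}
    (hP : ∀ x ∈ Ico (0:ℝ) 1, (P (T x) ↔ P x)) (hfin : {p | IsJump P p}.Finite) {p : ℝ}
    (hp : IsJump P p) : ∃ n, T^[n] p ∈ D := by
  by_contra! hno
  have hall : ∀ n, IsJump P (T^[n] p) := by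
    intro n
    induction n with
    | zero => exact hp
    | succ n ih =>
      rw [Function.iterate_succ_apply']
      exact h.isJump_apply hP ih (hno n)
  exact Set.infinite_of_injective_forall_mem (h.iterate_injective hper hp.1) hall hfin

/-- Keane's minimality theorem with uniformly bounded hitting times. -/
theorem minimal (h : IsPiecewiseTranslation T D) (h' : IsPiecewiseTranslation S D')
    (hST : ∀ x ∈ Ico (0:ℝ) 1, S (T x) = x) (hTS : ∀ x ∈ Ico (0:ℝ) 1, T (S x) = x)
    (hper : ∀ p ∈ Ico (0:ℝ) 1, ∀ n, 1 ≤ n → T^[n] p ≠ p)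
    (hconn : ∀ d ∈ D', ∀ n, T^[n] d ∉ D) {a b : ℝ} (ha : 0 ≤ a) (hab : a < b) (hb : b ≤ 1) :
    ∃ N, ∀ x ∈ Ico (0:ℝ) 1, ∃ n < N, T^[n] x ∈ Ico a b := by
  have hsub : ∀ z ∈ Ico a b, z ∈ Ico (0:ℝ) 1 := fun z hz => ⟨ha.trans hz.1, hz.2.trans_le hb⟩
  have hSTn : ∀ n, ∀ x ∈ Ico (0:ℝ) 1, S^[n] (T^[n] x) = x := by
    intro n
    induction n with
    | zero => intro x _; rfl
    | succ n ih =>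
      intro x hx
      rw [Function.iterate_succ_apply, Function.iterate_succ_apply',
        hST _ (h.iterate_mem hx n), ih x hx]
  have hTSn : ∀ n, ∀ x ∈ Ico (0:ℝ) 1, T^[n] (S^[n] x) = x := by
    intro n
    induction n with
    | zero => intro x _; rfl
    | succ n ih =>
      intro x hx
      rw [Function.iterate_succ_apply, Function.iterate_succ_apply',
        hTS _ (h'.iterate_mem hx n), ih x hx]
  have hper' : ∀ p ∈ Ico (0:ℝ) 1, ∀ n, 1 ≤ n → S^[n] p ≠ p := fun p hp n hn he =>
    hper p hp n hn (by conv_lhs => rw [← he, hTSn n p hp])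
  obtain ⟨M, hM⟩ := h.recurrent ha hb
  obtain ⟨N, hN⟩ := h'.recurrent ha hb
  set P : ℝ → Prop := fun x => ∃ n, T^[n] x ∈ Ico a b with hPdef
  have hPT : ∀ x ∈ Ico (0:ℝ) 1, (P (T x) ↔ P x) := by
    intro x _
    constructor
    · rintro ⟨n, hn⟩
      exact ⟨n + 1, hn⟩
    · rintro ⟨n, hn⟩
      rcases n with - | n
      · obtain ⟨m, hm1, -, hm⟩ := hM x hn
        exact ⟨m - 1, by
          rwa [← Function.iterate_succ_apply, Nat.succ_eq_add_one, Nat.sub_add_cancel hm1]⟩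
      · exact ⟨n, hn⟩
  have hPS : ∀ x ∈ Ico (0:ℝ) 1, (P (S x) ↔ P x) := by
    intro x hx
    rw [← hPT _ (h'.mapsTo hx), hTS x hx]
  have hPN : ∀ x ∈ Ico (0:ℝ) 1, P x → ∃ n < N, T^[n] x ∈ Ico a b := by
    classical
    intro x hx hPx
    refine ⟨Nat.find hPx, ?_, Nat.find_spec hPx⟩
    by_contra! hle
    obtain ⟨m, hm1, hmN, hm⟩ := hN _ (Nat.find_spec hPx)
    refine Nat.find_min hPx (m := Nat.find hPx - m) (by omega) ?_
    have : T^[Nat.find hPx] x = T^[m] (T^[Nat.find hPx - m] x) := by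
      rw [← Function.iterate_add_apply, Nat.add_sub_cancel' (by omega)]
    rwa [this, hSTn m _ (h.iterate_mem hx _)] at hm
  suffices hall : ∀ x ∈ Ico (0:ℝ) 1, P x from ⟨N, fun x hx => hPN x hx (hall x hx)⟩
  have h2 := h.mono (D' := insert a (insert b D)) (by intro d hd; simp [hd])
  have hloc : ∀ x ∈ Ico (0:ℝ) 1, ∀ y ∈ Ico (0:ℝ) 1, x ≤ y →
      NoCut T (insert a (insert b D)) N x y → (P x ↔ P y) := by
    intro x hx y hy hxy hc
    constructor
    · intro hPx
      obtain ⟨n, hn, hin⟩ := hPN x hx hPx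
      exact ⟨n, (h2.iterate_mem_Ico_iff hx hy hxy hc hn (by simp) (by simp)).1 hin⟩
    · intro hPy
      obtain ⟨n, hn, hin⟩ := hPN y hy hPy
      exact ⟨n, (h2.iterate_mem_Ico_iff hx hy hxy hc hn (by simp) (by simp)).2 hin⟩
  have hF := h2.finite_cuts N
  have hjfin : {p | IsJump P p}.Finite := by
    refine hF.subset ?_
    rintro p ⟨hp, q, hq0, hqp, hq⟩
    by_contra hpF
    obtain ⟨q', hq'0, hq'p, hq'⟩ := h2.exists_noCut_left N hp (hq0.trans_lt hqp)
      fun n hn hd => hpF ⟨hp, n, hn, hd⟩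
    have hm : max q q' < p := max_lt hqp hq'p
    exact hq _ (le_max_left _ _) hm (hloc _ ⟨hq0.trans (le_max_left _ _), hm.trans hp.2⟩ p hp hm.le
      (hq'.mono le_rfl (le_max_right _ _) le_rfl))
  have hnojump : ∀ p, ¬ IsJump P p := by
    intro p hp
    obtain ⟨n, hn⟩ := h.exists_iterate_mem hper hPT hjfin hp
    obtain ⟨m, hm⟩ := h'.exists_iterate_mem hper' hPS hjfin hp
    refine hconn _ hm (n + m) ?_
    rwa [Function.iterate_add_apply, hTSn m p hp.1]
  have hconst : ∀ x ∈ Ico (0:ℝ) 1, ∀ y ∈ Ico (0:ℝ) 1, x ≤ y → (P x ↔ P y) := by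
    intro x hx y hy hxy
    by_contra hne
    obtain ⟨p, -, hxp, hpy, hp⟩ := hF.exists_jump (P := P) (fun x hx y hy hxy hz =>
      hloc x hx y hy hxy fun z hz1 hz2 n hn hd =>
        hz z ⟨⟨hx.1.trans hz1.le, hz2.trans_lt hy.2⟩, n, hn, hd⟩ ⟨hz1, hz2⟩) hx hy hxy hne
    exact hnojump p ⟨⟨hx.1.trans hxp.le, hpy.trans_lt hy.2⟩, x, hx.1, hxp, hp⟩
  have haP : P a := ⟨0, le_rfl, hab⟩
  have haI : a ∈ Ico (0:ℝ) 1 := hsub a ⟨le_rfl, hab⟩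
  intro x hx
  rcases le_total x a with hle | hle
  · exact (hconst x hx a haI hle).2 haP
  · exact (hconst a haI x hx hle).1 haP

end IsPiecewiseTranslation

theorem Finset.exists_card_filter_le_eq {Y : Finset ℝ} {m : ℕ} (hm : 1 ≤ m) (hmY : m ≤ Y.card) :
    ∃ u ∈ Y, (Y.filter (· ≤ u)).card = m := by
  have hinj : Set.InjOn (fun u => (Y.filter (· ≤ u)).card) Y := by
    have key : ∀ u ∈ Y, ∀ v ∈ Y, u < v → (Y.filter (· ≤ u)).card < (Y.filter (· ≤ v)).card := by
      intro u _ v hv huv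
      refine Finset.card_lt_card (Finset.ssubset_iff_of_subset ?_ |>.2 ⟨v, by simp [hv], by simp [huv]⟩)
      exact Finset.monotone_filter_right _ fun z _ hz => hz.trans huv.le
    intro u hu v hv he
    rcases lt_trichotomy u v with hlt | heq | hlt
    · exact absurd he (key u hu v hv hlt).ne
    · exact heq
    · exact absurd he (key v hv u hu hlt).ne'
  have hmaps : ∀ u ∈ Y, (Y.filter (· ≤ u)).card ∈ Finset.Icc 1 Y.card := by
    intro u hu
    rw [Finset.mem_Icc]
    exact ⟨Finset.card_pos.2 ⟨u, by simp [hu]⟩, Finset.card_filter_le _ _⟩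
  obtain ⟨u, hu, he⟩ := Finset.surjOn_of_injOn_of_card_le _ hmaps hinj (by simp)
    (show m ∈ ((Finset.Icc 1 Y.card : Finset ℕ) : Set ℕ) by simp [hm, hmY])
  exact ⟨u, hu, he⟩

theorem Set.ncard_image_eq_of_eq_iff {α β γ : Type*} {f : α → β} {g : α → γ} {s : Set α}
    (h : ∀ x ∈ s, ∀ y ∈ s, (f x = f y ↔ g x = g y)) (hg : (g '' s).Finite) :
    (f '' s).Finite ∧ (f '' s).ncard = (g '' s).ncard := by
  have h1 : Set.InjOn Prod.fst ((fun x => (f x, g x)) '' s) := by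
    rintro _ ⟨x, hx, rfl⟩ _ ⟨y, hy, rfl⟩ he
    exact Prod.ext he ((h x hx y hy).1 he)
  have h2 : Set.InjOn Prod.snd ((fun x => (f x, g x)) '' s) := by
    rintro _ ⟨x, hx, rfl⟩ _ ⟨y, hy, rfl⟩ he
    exact Prod.ext ((h x hx y hy).2 he) he
  have e1 : Prod.fst '' ((fun x => (f x, g x)) '' s) = f '' s := by rw [← Set.image_comp]; rfl
  have e2 : Prod.snd '' ((fun x => (f x, g x)) '' s) = g '' s := by rw [← Set.image_comp]; rfl
  rw [← e2] at hg ⊢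
  rw [← e1]
  refine ⟨(Set.Finite.of_finite_image hg h2).image _, ?_⟩
  rw [h1.ncard_image, h2.ncard_image]

/-- The points of `[0,1)` whose itinerary under the coding map `c` starts with `w`. -/
def cylinder {A : Type*} (T : ℝ → ℝ) (c : ℝ → A) (w : List A) : Set ℝ :=
  {z | z ∈ Ico (0:ℝ) 1 ∧ ∀ j : Fin w.length, c (T^[j] z) = w.get j}

/-- `r` is the first return time of `z` to `J`. -/
def IsReturnTime (T : ℝ → ℝ) (J : Set ℝ) (z : ℝ) (r : ℕ) : Prop :=
  1 ≤ r ∧ T^[r] z ∈ J ∧ ∀ t, 1 ≤ t → t < r → T^[t] z ∉ J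

theorem IsReturnTime.unique {T : ℝ → ℝ} {J : Set ℝ} {z : ℝ} {r s : ℕ} (hr : IsReturnTime T J z r)
    (hs : IsReturnTime T J z s) : r = s := by
  rcases lt_trichotomy r s with hlt | heq | hlt
  · exact absurd hr.2.1 (hs.2.2 r hr.1 hlt)
  · exact heq
  · exact absurd hs.2.1 (hr.2.2 s hs.1 hlt)

/-- `u` lies in the cylinder of `w` and reaches `D` after its initial occurrence of `w`, before
a second occurrence of `w` is completed. -/
def IsReturnCut {A : Type*} (T : ℝ → ℝ) (D : Finset ℝ) (c : ℝ → A) (w : List A) (m : ℕ) (u : ℝ) :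
    Prop :=
  u ∈ cylinder T c w ∧ w.length ≤ m ∧ T^[m] u ∈ D ∧
    ∀ t, 1 ≤ t → t + w.length ≤ m → T^[t] u ∉ cylinder T c w

theorem mem_cylinder_congr {A : Type*} {T : ℝ → ℝ} {c : ℝ → A} {w : List A} {x y : ℝ}
    (hx : x ∈ Ico (0:ℝ) 1) (hy : y ∈ Ico (0:ℝ) 1)
    (h : ∀ n < w.length, c (T^[n] x) = c (T^[n] y)) :
    x ∈ cylinder T c w ↔ y ∈ cylinder T c w := by
  constructor
  · exact fun hz => ⟨hy, fun j => by rw [← h j j.2]; exact hz.2 j⟩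
  · exact fun hz => ⟨hx, fun j => by rw [h j j.2]; exact hz.2 j⟩

namespace IsPiecewiseTranslation

variable {A : Type*} {T : ℝ → ℝ} {D : Finset ℝ} {c : ℝ → A} {w : List A}

theorem noCut_iff (h : IsPiecewiseTranslation T D)
    (hc : ∀ x ∈ Ico (0:ℝ) 1, ∀ y ∈ Ico (0:ℝ) 1, x ≤ y →
      (c x = c y ↔ ∀ d ∈ D, ¬ (x < d ∧ d ≤ y))) {x y : ℝ} (hx : x ∈ Ico (0:ℝ) 1)
    (hy : y ∈ Ico (0:ℝ) 1) (hxy : x ≤ y) (m : ℕ) :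
    NoCut T D m x y ↔ ∀ n < m, c (T^[n] x) = c (T^[n] y) := by
  constructor
  · intro hcut n hn
    have hn' := h.iterate_trans hx hy hxy (hcut.mono hn.le le_rfl le_rfl)
    exact (hc _ (h.iterate_mem hx n) _ (h.iterate_mem hy n) (by linarith)).2
      fun d hd => h.not_separated hx hy hxy hcut hn hd
  · induction m with
    | zero => intro _ z _ _ n hn; omega
    | succ m ih =>
      intro heq z hz1 hz2 n hn hd
      have ih := ih fun n hn => heq n (by omega)
      rcases Nat.lt_succ_iff_lt_or_eq.1 hn with hn | rfl
      · exact ih z hz1 hz2 n hn hd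
      have hz : z ∈ Ico (0:ℝ) 1 := ⟨hx.1.trans hz1.le, hz2.trans_lt hy.2⟩
      have h1 := h.iterate_trans hx hz hz1.le (ih.mono le_rfl le_rfl hz2)
      have h2 := h.iterate_trans hx hy (hz1.le.trans hz2) ih
      exact (hc _ (h.iterate_mem hx n) _ (h.iterate_mem hy n) (by linarith)).1
        (heq n (Nat.lt_succ_self n)) _ hd ⟨by linarith, by linarith⟩

theorem mem_cylinder_iff_of_noCut (h : IsPiecewiseTranslation T D)
    (hc : ∀ x ∈ Ico (0:ℝ) 1, ∀ y ∈ Ico (0:ℝ) 1, x ≤ y →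
      (c x = c y ↔ ∀ d ∈ D, ¬ (x < d ∧ d ≤ y))) {x y : ℝ} (hx : x ∈ Ico (0:ℝ) 1)
    (hy : y ∈ Ico (0:ℝ) 1) (hxy : x ≤ y) {m t : ℕ} (hcut : NoCut T D m x y)
    (ht : t + w.length ≤ m) : T^[t] x ∈ cylinder T c w ↔ T^[t] y ∈ cylinder T c w := by
  refine mem_cylinder_congr (h.iterate_mem hx t) (h.iterate_mem hy t) fun n hn => ?_
  rw [← Function.iterate_add_apply, ← Function.iterate_add_apply]
  exact (h.noCut_iff hc hx hy hxy m).1 hcut _ (by omega)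

theorem noCut_of_mem_cylinder (h : IsPiecewiseTranslation T D)
    (hc : ∀ x ∈ Ico (0:ℝ) 1, ∀ y ∈ Ico (0:ℝ) 1, x ≤ y →
      (c x = c y ↔ ∀ d ∈ D, ¬ (x < d ∧ d ≤ y))) {x y : ℝ} (hx : x ∈ cylinder T c w)
    (hy : y ∈ cylinder T c w) (hxy : x ≤ y) : NoCut T D w.length x y :=
  (h.noCut_iff hc hx.1 hy.1 hxy _).2 fun n hn => (hx.2 ⟨n, hn⟩).trans (hy.2 ⟨n, hn⟩).symm

/-- Two points of a cylinder not separated by a return cut have the same return time and the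
same itinerary up to the end of the next occurrence. -/
theorem noCut_of_no_returnCut (h : IsPiecewiseTranslation T D)
    (hc : ∀ x ∈ Ico (0:ℝ) 1, ∀ y ∈ Ico (0:ℝ) 1, x ≤ y →
      (c x = c y ↔ ∀ d ∈ D, ¬ (x < d ∧ d ≤ y))) {x y : ℝ} (hx : x ∈ cylinder T c w)
    (hy : y ∈ cylinder T c w) (hxy : x ≤ y) {r s : ℕ}
    (hr : IsReturnTime T (cylinder T c w) x r) (hs : IsReturnTime T (cylinder T c w) y s)
    (hno : ∀ m u, IsReturnCut T D c w m u → ¬ (x < u ∧ u ≤ y)) :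
    r = s ∧ NoCut T D (r + w.length) x y := by
  have hcut : ∀ n ≤ min r s + w.length, NoCut T D n x y := by
    intro n
    induction n with
    | zero => intro _ z _ _ n hn; omega
    | succ n ih =>
      intro hnle z hz1 hz2 t ht hd
      have ih := ih (by omega)
      rcases Nat.lt_succ_iff_lt_or_eq.1 ht with ht | rfl
      · exact ih z hz1 hz2 t ht hd
      have hL := h.noCut_of_mem_cylinder hc hx hy hxy
      have hz : z ∈ Ico (0:ℝ) 1 := ⟨hx.1.1.trans hz1.le, hz2.trans_lt hy.1.2⟩
      have htL : w.length ≤ t := by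
        by_contra! hlt
        exact hL z hz1 hz2 t hlt hd
      refine hno t z ⟨?_, htL, hd, fun q hq1 hq hqz => ?_⟩ ⟨hz1, hz2⟩
      · exact (h.mem_cylinder_iff_of_noCut hc (t := 0) hx.1 hz hz1.le
          (hL.mono le_rfl le_rfl hz2) (by omega)).1 hx
      · have h1 := (h.mem_cylinder_iff_of_noCut hc hx.1 hz hz1.le
          (ih.mono le_rfl le_rfl hz2) hq).2 hqz
        have h2 := (h.mem_cylinder_iff_of_noCut hc hz hy.1 hz2
          (ih.mono le_rfl hz1.le le_rfl) hq).1 hqz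
        have hrq : r ≤ q := by
          by_contra! hlt
          exact hr.2.2 q hq1 hlt h1
        have hsq : s ≤ q := by
          by_contra! hlt
          exact hs.2.2 q hq1 hlt h2
        omega
  have hcut := hcut _ le_rfl
  have hrs : r = s := by
    rcases lt_trichotomy r s with hlt | heq | hlt
    · exact absurd ((h.mem_cylinder_iff_of_noCut hc hx.1 hy.1 hxy hcut (by omega)).1 hr.2.1)
        (hs.2.2 r hr.1 hlt)
    · exact heq
    · exact absurd ((h.mem_cylinder_iff_of_noCut hc hx.1 hy.1 hxy hcut (by omega)).2 hs.2.1)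
        (hr.2.2 s hs.1 hlt)
  exact ⟨hrs, by rwa [hrs, min_self, ← hrs] at hcut⟩

/-- Two points of a cylinder separated by a return cut have different return words. -/
theorem not_returnCut_of_eq (h : IsPiecewiseTranslation T D)
    (hc : ∀ x ∈ Ico (0:ℝ) 1, ∀ y ∈ Ico (0:ℝ) 1, x ≤ y →
      (c x = c y ↔ ∀ d ∈ D, ¬ (x < d ∧ d ≤ y))) {x y : ℝ} (hx : x ∈ cylinder T c w)
    (hy : y ∈ cylinder T c w) (hxy : x ≤ y) {r : ℕ}
    (hr : IsReturnTime T (cylinder T c w) x r) (hs : IsReturnTime T (cylinder T c w) y r)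
    (heq : ∀ t < r, c (T^[t] x) = c (T^[t] y)) {m : ℕ} {u : ℝ}
    (hu : IsReturnCut T D c w m u) : ¬ (x < u ∧ u ≤ y) := by
  rintro ⟨hxu, huy⟩
  have hcut : NoCut T D (r + w.length) x y := by
    refine (h.noCut_iff hc hx.1 hy.1 hxy _).2 fun n hn => ?_
    rcases lt_or_ge n r with hlt | hge
    · exact heq n hlt
    · have h1 := hr.2.1.2 ⟨n - r, by omega⟩
      have h2 := hs.2.1.2 ⟨n - r, by omega⟩
      rw [← Function.iterate_add_apply, Nat.sub_add_cancel hge] at h1 h2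
      exact h1.trans h2.symm
  obtain ⟨huc, -, hd, hno⟩ := hu
  have hm : r + w.length ≤ m := by
    by_contra! hlt
    exact hcut u hxu huy m hlt hd
  exact hno r hr.1 hm ((h.mem_cylinder_iff_of_noCut hc hx.1 huc.1 hxu.le
    (hcut.mono le_rfl le_rfl huy) le_rfl).1 hr.2.1)

/-- Every element of `D` is reached from a return cut. -/
theorem exists_returnCut (hsurj : SurjOn T (Ico 0 1) (Ico 0 1)) {N : ℕ}
    (hN : ∀ x ∈ Ico (0:ℝ) 1, ∃ n < N, T^[n] x ∈ cylinder T c w) {d : ℝ} (hd : d ∈ D)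
    (hdI : d ∈ Ico (0:ℝ) 1) : ∃ m u, IsReturnCut T D c w m u ∧ T^[m] u = d := by
  classical
  have hsn : SurjOn T^[w.length + N] (Ico 0 1) (Ico 0 1) := hsurj.iterate _
  obtain ⟨y, hy, hyd⟩ := hsn hdI
  obtain ⟨n, hn, hny⟩ := hN y hy
  have hex : ∃ m, w.length ≤ m ∧ ∃ u ∈ cylinder T c w, T^[m] u = d := by
    refine ⟨w.length + N - n, by omega, T^[n] y, hny, ?_⟩
    rw [← Function.iterate_add_apply, Nat.sub_add_cancel (by omega), hyd]
  obtain ⟨hL, u, hu, hud⟩ := Nat.find_spec hex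
  refine ⟨Nat.find hex, u, ⟨hu, hL, by rwa [hud], fun t ht1 ht htu => ?_⟩, hud⟩
  refine Nat.find_min hex (m := Nat.find hex - t) (by omega) ⟨by omega, _, htu, ?_⟩
  rw [← Function.iterate_add_apply, Nat.sub_add_cancel (by omega), hud]

theorem returnCut_unique (h : IsPiecewiseTranslation T D) {m n : ℕ} {u v : ℝ}
    (hu : IsReturnCut T D c w m u) (hv : IsReturnCut T D c w n v) (he : T^[m] u = T^[n] v) :
    u = v := by
  have key : ∀ {m n : ℕ} {u v : ℝ}, IsReturnCut T D c w m u → IsReturnCut T D c w n v →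
      T^[m] u = T^[n] v → m ≤ n → u = v := by
    intro m n u v hu hv he hmn
    have h1 := h.eq_iterate_sub hu.1.1 hv.1.1 hmn he
    rcases Nat.eq_zero_or_pos (n - m) with h0 | h0
    · rwa [h0] at h1
    · exact absurd (h1 ▸ hu.1) (hv.2.2.2 _ h0 (by have := hu.2.1; omega))
  rcases le_total m n with hle | hle
  · exact key hu hv he hle
  · exact (key hv hu he.symm hle).symm

theorem returnCut_end_unique (hD : ∀ d ∈ D, ∀ n, 1 ≤ n → T^[n] d ∉ D) {m n : ℕ} {u : ℝ}
    (hu : T^[m] u ∈ D) (hv : T^[n] u ∈ D) : m = n := by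
  have key : ∀ {m n : ℕ}, T^[m] u ∈ D → T^[n] u ∈ D → ¬ m < n := by
    intro m n hu hv hlt
    refine hD _ hu (n - m) (by omega) ?_
    rwa [← Function.iterate_add_apply, Nat.sub_add_cancel hlt.le]
  have h1 := key hu hv
  have h2 := key hv hu
  omega

/-- A return cut is not the least point of its cylinder. -/
theorem exists_lt_returnCut (h : IsPiecewiseTranslation T D)
    (hc : ∀ x ∈ Ico (0:ℝ) 1, ∀ y ∈ Ico (0:ℝ) 1, x ≤ y →
      (c x = c y ↔ ∀ d ∈ D, ¬ (x < d ∧ d ≤ y)))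
    (hD : ∀ d ∈ D, ∀ n, 1 ≤ n → T^[n] d ∉ D) (h0 : ∀ n, T^[n] 0 ∉ D) {m : ℕ} {u : ℝ}
    (hu : IsReturnCut T D c w m u) : ∃ v ∈ cylinder T c w, v < u := by
  obtain ⟨huc, hL, hd, -⟩ := hu
  have hu0 : 0 < u := by
    refine huc.1.1.lt_of_ne ?_
    rintro rfl
    exact h0 m hd
  obtain ⟨q, hq0, hqu, hq⟩ := h.exists_noCut_left w.length huc.1 hu0 fun n hn hn' => by
    have := returnCut_end_unique hD hd hn'
    omega
  refine ⟨q, ?_, hqu⟩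
  exact (h.mem_cylinder_iff_of_noCut hc (t := 0) ⟨hq0, hqu.trans huc.1.2⟩ huc.1 hqu.le hq
    (by omega)).2 huc

end IsPiecewiseTranslation

namespace IsPiecewiseTranslation

variable {A : Type*} {T : ℝ → ℝ} {D : Finset ℝ} {c : ℝ → A} {w : List A}

/-- The return words are counted by the elements of `D`. -/
theorem ncard_returnWords (h : IsPiecewiseTranslation T D)
    (hc : ∀ x ∈ Ico (0:ℝ) 1, ∀ y ∈ Ico (0:ℝ) 1, x ≤ y →
      (c x = c y ↔ ∀ d ∈ D, ¬ (x < d ∧ d ≤ y)))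
    (hD : ∀ d ∈ D, ∀ n, 1 ≤ n → T^[n] d ∉ D) (h0 : ∀ n, T^[n] 0 ∉ D)
    (hsurj : SurjOn T (Ico 0 1) (Ico 0 1)) (hDI : ∀ d ∈ D, d ∈ Ico (0:ℝ) 1)
    (hmin : ∀ a b : ℝ, 0 ≤ a → a < b → b ≤ 1 →
      ∃ N, ∀ x ∈ Ico (0:ℝ) 1, ∃ n < N, T^[n] x ∈ Ico a b)
    {x : ℝ} (hx : x ∈ Ico (0:ℝ) 1) {U : ℕ → A} (hU : ∀ n, U n = c (T^[n] x))
    (hw : IsFactor U w) :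
    (ReturnWords U w).Finite ∧ (ReturnWords U w).ncard = D.card + 1 := by
  classical
  have hocc : ∀ i, OccursAt U w i ↔ T^[i] x ∈ cylinder T c w := by
    intro i
    simp only [OccursAt, cylinder, mem_ofPred_eq, hU, h.iterate_mem hx i, true_and,
      ← Function.iterate_add_apply, Nat.add_comm i]
  obtain ⟨i₀, hi₀⟩ := hw
  rw [hocc] at hi₀
  have hright : ∀ u ∈ cylinder T c w, ∃ q, u < q ∧ q ≤ 1 ∧ ∀ z ∈ Ico u q, z ∈ cylinder T c w := by
    intro u hu
    obtain ⟨q, huq, hq1, hq⟩ := h.exists_noCut_right w.length hu.1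
    refine ⟨q, huq, hq1, fun z hz => ?_⟩
    exact (h.mem_cylinder_iff_of_noCut hc (t := 0) hu.1 ⟨hu.1.1.trans hz.1, hz.2.trans_le hq1⟩ hz.1
      (hq z hz.2) (by omega)).1 hu
  obtain ⟨N, hN⟩ : ∃ N, ∀ y ∈ Ico (0:ℝ) 1, ∃ n < N, T^[n] y ∈ cylinder T c w := by
    obtain ⟨q, h1, h2, h3⟩ := hright _ hi₀
    obtain ⟨N, hN⟩ := hmin _ q hi₀.1.1 h1 h2
    refine ⟨N, fun y hy => ?_⟩
    obtain ⟨n, hn, hny⟩ := hN y hy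
    exact ⟨n, hn, h3 _ hny⟩
  -- the set of return cuts
  have hex : ∀ d, ∃ u, d ∈ D → ∃ m, IsReturnCut T D c w m u ∧ T^[m] u = d := by
    intro d
    by_cases hd : d ∈ D
    · obtain ⟨m, u, h1, h2⟩ := exists_returnCut hsurj hN hd (hDI d hd)
      exact ⟨u, fun _ => ⟨m, h1, h2⟩⟩
    · exact ⟨0, fun hd' => absurd hd' hd⟩
  choose y hy using hex
  set Y := D.image y with hY
  have hYcard : Y.card = D.card := by
    refine Finset.card_image_of_injOn fun d hd d' hd' he => ?_
    obtain ⟨m, hm, hmd⟩ := hy d hd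
    obtain ⟨n, hn, hnd⟩ := hy d' hd'
    rw [← he] at hn hnd
    rw [← hmd, ← hnd, returnCut_end_unique hD hm.2.2.1 hn.2.2.1]
  have hYcut : ∀ u, u ∈ Y ↔ ∃ m, IsReturnCut T D c w m u := by
    intro u
    rw [hY, Finset.mem_image]
    constructor
    · rintro ⟨d, hd, rfl⟩
      obtain ⟨m, hm, -⟩ := hy d hd
      exact ⟨m, hm⟩
    · rintro ⟨m, hm⟩
      obtain ⟨n, hn, hnd⟩ := hy _ hm.2.2.1
      exact ⟨_, hm.2.2.1, h.returnCut_unique hn hm hnd⟩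
  set φ : ℝ → ℕ := fun z => (Y.filter (· ≤ z)).card with hφ
  have hφmono : ∀ z z', z ≤ z' → (φ z = φ z' ↔ ∀ u ∈ Y, ¬ (z < u ∧ u ≤ z')) := by
    intro z z' hzz
    have hsub : Y.filter (· ≤ z) ⊆ Y.filter (· ≤ z') :=
      Finset.monotone_filter_right _ fun u _ hu => hu.trans hzz
    constructor
    · intro he u hu huz
      have := Finset.eq_of_subset_of_card_le hsub he.ge
      have hmem : u ∈ Y.filter (· ≤ z) := by rw [this]; simp [hu, huz.2]
      exact absurd (Finset.mem_filter.1 hmem).2 (not_le.2 huz.1)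
    · intro hno
      refine congrArg Finset.card (hsub.antisymm fun u hu => ?_)
      rw [Finset.mem_filter] at hu ⊢
      exact ⟨hu.1, not_lt.1 fun hlt => hno u hu.1 ⟨hlt, hu.2⟩⟩
  -- first return times
  have hret : ∀ z, ∃ r, z ∈ cylinder T c w → IsReturnTime T (cylinder T c w) z r := by
    intro z
    by_cases hz : z ∈ cylinder T c w
    · have hex : ∃ r, 1 ≤ r ∧ T^[r] z ∈ cylinder T c w := by
        obtain ⟨n, -, hn⟩ := hN (T z) (h.mapsTo hz.1)
        exact ⟨n + 1, by omega, hn⟩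
      exact ⟨Nat.find hex, fun _ => ⟨(Nat.find_spec hex).1, (Nat.find_spec hex).2,
        fun t ht1 ht htz => Nat.find_min hex ht ⟨ht1, htz⟩⟩⟩
    · exact ⟨0, fun hz' => absurd hz' hz⟩
  choose r hr using hret
  set R : ℝ → List A := fun z => List.ofFn fun t : Fin (r z) => c (T^[t] z) with hR
  have hReq : ∀ z z', R z = R z' ↔ r z = r z' ∧ ∀ t < r z, c (T^[t] z) = c (T^[t] z') := by
    intro z z'
    simp only [hR]
    constructor
    · intro he
      have hlen : r z = r z' := by simpa using congrArg List.length he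
      refine ⟨hlen, fun t ht => ?_⟩
      have := List.getElem_of_eq he (i := t) (by simpa using ht)
      simpa using this
    · rintro ⟨hlen, ht⟩
      refine List.ext_getElem (by simpa using hlen) fun t h1 h2 => ?_
      simpa using ht t (by simpa using h1)
  have hRφ : ∀ z ∈ cylinder T c w, ∀ z' ∈ cylinder T c w, (R z = R z' ↔ φ z = φ z') := by
    have key : ∀ z ∈ cylinder T c w, ∀ z' ∈ cylinder T c w, z ≤ z' →
        (R z = R z' ↔ φ z = φ z') := by
      intro z hz z' hz' hle
      rw [hReq, hφmono z z' hle]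
      constructor
      · rintro ⟨he, ht⟩ u hu
        obtain ⟨m, hm⟩ := (hYcut u).1 hu
        exact h.not_returnCut_of_eq hc hz hz' hle (hr z hz) (he ▸ hr z' hz') ht hm
      · intro hno
        obtain ⟨h1, h2⟩ := h.noCut_of_no_returnCut hc hz hz' hle (hr z hz) (hr z' hz')
          fun m u hu => hno u ((hYcut u).2 ⟨m, hu⟩)
        exact ⟨h1, fun t ht => (h.noCut_iff hc hz.1 hz'.1 hle _).1 h2 t (by omega)⟩
    intro z hz z' hz'
    rcases le_total z z' with hle | hle
    · exact key z hz z' hz' hle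
    · rw [eq_comm, key z' hz' z hz hle, eq_comm]
  set O : Set ℝ := {z | z ∈ cylinder T c w ∧ ∃ i, T^[i] x = z} with hO
  have hRW : ReturnWords U w = R '' O := by
    ext l
    constructor
    · rintro ⟨i, j, hi, hj, hij, hno, rfl⟩
      rw [hocc] at hi hj
      have hrt : IsReturnTime T (cylinder T c w) (T^[i] x) (j - i) := by
        refine ⟨by omega, ?_, fun t ht1 ht htc => ?_⟩
        · rwa [← Function.iterate_add_apply, Nat.sub_add_cancel hij.le]
        · rw [← Function.iterate_add_apply, ← hocc] at htc
          exact hno (t + i) (by omega) (by omega) htc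
      refine ⟨T^[i] x, ⟨hi, i, rfl⟩, ?_⟩
      simp only [hR]
      rw [(hr _ hi).unique hrt]
      simp only [hU, ← Function.iterate_add_apply, Nat.add_comm i]
    · rintro ⟨_, ⟨hz, i, rfl⟩, rfl⟩
      obtain ⟨h1, h2, h3⟩ := hr _ hz
      refine ⟨i, i + r (T^[i] x), (hocc i).2 hz, (hocc _).2 ?_, by omega, fun t ht1 ht2 hto => ?_, ?_⟩
      · rwa [Nat.add_comm, Function.iterate_add_apply]
      · refine h3 (t - i) (by omega) (by omega) ?_
        rwa [← Function.iterate_add_apply, Nat.sub_add_cancel ht1.le, ← hocc]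
      · simp only [hR]
        rw [Nat.add_sub_cancel_left]
        simp only [hU, ← Function.iterate_add_apply, Nat.add_comm i]
  have hφO : φ '' O = ((Finset.range (D.card + 1) : Finset ℕ) : Set ℕ) := by
    ext m
    rw [Finset.mem_coe, Finset.mem_range, Nat.lt_succ_iff, ← hYcard]
    constructor
    · rintro ⟨z, -, rfl⟩
      exact Finset.card_filter_le _ _
    · intro hm
      obtain ⟨u, hu, hum⟩ : ∃ u ∈ cylinder T c w, φ u = m := by
        rcases Nat.eq_zero_or_pos m with rfl | hm0
        · rcases Y.eq_empty_or_nonempty with hY0 | hYne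
          · exact ⟨_, hi₀, by simp [hφ, hY0]⟩
          · obtain ⟨n, hn⟩ := (hYcut _).1 (Y.min'_mem hYne)
            obtain ⟨v, hv, hvu⟩ := h.exists_lt_returnCut hc hD h0 hn
            refine ⟨v, hv, ?_⟩
            simp only [hφ, Finset.card_eq_zero, Finset.filter_eq_empty_iff, not_le]
            exact fun z hz => hvu.trans_le (Y.min'_le z hz)
        · obtain ⟨u, hu, he⟩ := Finset.exists_card_filter_le_eq hm0 hm
          obtain ⟨n, hn⟩ := (hYcut u).1 hu
          exact ⟨u, hn.1, he⟩
      obtain ⟨q, hq, hq1, hqc⟩ := hright u hu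
      obtain ⟨ε, hε, hgap⟩ := Y.finite_toSet.exists_gap u
      obtain ⟨M, hM⟩ := hmin u (min q (u + ε)) hu.1.1 (lt_min hq (by linarith))
        ((min_le_left _ _).trans hq1)
      obtain ⟨n, -, hn1, hn2⟩ := hM x hx
      refine ⟨T^[n] x, ⟨hqc _ ⟨hn1, hn2.trans_le (min_le_left _ _)⟩, n, rfl⟩, ?_⟩
      rw [← hum, eq_comm, hφmono _ _ hn1]
      rintro v hv ⟨hv1, hv2⟩
      have h1 := hgap v hv hv1.ne'
      have h2 := hn2.trans_le (min_le_right _ _)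
      rw [abs_of_pos (by linarith)] at h1
      linarith
  have hfin : (φ '' O).Finite := by rw [hφO]; exact Finset.finite_toSet _
  have hres := Set.ncard_image_eq_of_eq_iff (f := R) (g := φ) (s := O)
    (fun z hz z' hz' => hRφ z hz.1 z' hz'.1) hfin
  rw [hRW]
  refine ⟨hres.1, hres.2.trans ?_⟩
  rw [hφO, Set.ncard_coe_finset, Finset.card_range]

end IsPiecewiseTranslation

section IntervalExchange

variable {k : ℕ} {lam : Fin k → ℝ} {σ : Equiv.Perm (Fin k)} {T : ℝ → ℝ}

theorem leftPt_add_le (hpos : ∀ i, 0 < lam i) {i j : Fin k} (hij : i < j) :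
    leftPt lam i + lam i ≤ leftPt lam j := by
  unfold leftPt
  rw [add_comm, ← Finset.sum_insert (by simp)]
  refine Finset.sum_le_sum_of_subset_of_nonneg (fun l hl => ?_) fun l _ _ => (hpos l).le
  simp only [Finset.mem_insert, Finset.mem_filter, Finset.mem_univ, true_and] at hl ⊢
  rcases hl with rfl | hl
  · exact hij
  · exact hl.trans hij

theorem leftPt_add_le_one (hpos : ∀ i, 0 < lam i) (hsum : ∑ i, lam i = 1) (i : Fin k) :
    leftPt lam i + lam i ≤ 1 := by
  unfold leftPt
  rw [add_comm, ← Finset.sum_insert (by simp), ← hsum]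
  exact Finset.sum_le_sum_of_subset_of_nonneg (Finset.subset_univ _) fun l _ _ => (hpos l).le

theorem leftPt_nonneg (hpos : ∀ i, 0 < lam i) (i : Fin k) : 0 ≤ leftPt lam i :=
  Finset.sum_nonneg fun l _ => (hpos l).le

theorem leftPt_zero {i : Fin k} (hi : (i : ℕ) = 0) : leftPt lam i = 0 := by
  unfold leftPt
  rw [Finset.filter_false_of_mem, Finset.sum_empty]
  intro j _ hj
  rw [Fin.lt_def] at hj
  omega

theorem leftPt_succ {i j : Fin k} (hij : (j : ℕ) = i + 1) :
    leftPt lam j = leftPt lam i + lam i := by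
  unfold leftPt
  rw [add_comm, ← Finset.sum_insert (by simp)]
  congr 1
  ext l
  simp only [Finset.mem_insert, Finset.mem_filter, Finset.mem_univ, true_and, Fin.lt_def, Fin.ext_iff]
  omega

theorem leftPt_strictMono (hpos : ∀ i, 0 < lam i) : StrictMono (leftPt lam) := fun i j hij => by
  have := leftPt_add_le hpos hij
  have := hpos i
  linarith

theorem Xint_subset (hpos : ∀ i, 0 < lam i) (hsum : ∑ i, lam i = 1) (i : Fin k) :
    Xint lam i ⊆ Ico 0 1 := fun _ hx =>
  ⟨(leftPt_nonneg hpos i).trans hx.1, hx.2.trans_le (leftPt_add_le_one hpos hsum i)⟩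

theorem leftPt_mem_Xint (hpos : ∀ i, 0 < lam i) (i : Fin k) : leftPt lam i ∈ Xint lam i :=
  ⟨le_rfl, by linarith [hpos i]⟩

theorem exists_mem_Xint (hsum : ∑ i, lam i = 1) {x : ℝ} (hx : x ∈ Ico (0:ℝ) 1) :
    ∃ i, x ∈ Xint lam i := by
  have hk : 0 < k := by
    rcases Nat.eq_zero_or_pos k with rfl | hk
    · simp at hsum
    · exact hk
  obtain ⟨i, hi, hmax⟩ := (Finset.univ.filter fun i => leftPt lam i ≤ x).exists_max_image id
    ⟨⟨0, hk⟩, by simp [leftPt_zero, hx.1]⟩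
  simp only [Finset.mem_filter, Finset.mem_univ, true_and, id] at hi hmax
  refine ⟨i, hi, ?_⟩
  by_contra! hle
  rcases Nat.lt_or_ge (i + 1) k with hik | hik
  · have := hmax ⟨i + 1, hik⟩ (by rwa [leftPt_succ (i := i) rfl])
    rw [Fin.le_def] at this
    simp at this
  · have : leftPt lam i + lam i = 1 := by
      unfold leftPt
      rw [add_comm, ← Finset.sum_insert (by simp), ← hsum]
      congr 1
      ext l
      have := l.2
      simp only [Finset.mem_insert, Finset.mem_filter, Finset.mem_univ, true_and, Fin.lt_def,
        Fin.ext_iff, iff_true]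
      omega
    linarith [hx.2]

theorem exists_coding (hk : 0 < k) (hsum : ∑ i, lam i = 1) :
    ∃ c : ℝ → Fin k, ∀ x ∈ Ico (0:ℝ) 1, x ∈ Xint lam (c x) := by
  have hex : ∀ x, ∃ i, x ∈ Ico (0:ℝ) 1 → x ∈ Xint lam i := by
    intro x
    by_cases hx : x ∈ Ico (0:ℝ) 1
    · obtain ⟨i, hi⟩ := exists_mem_Xint hsum hx
      exact ⟨i, fun _ => hi⟩
    · exact ⟨⟨0, hk⟩, fun h => absurd h hx⟩
  choose c hc using hex
  exact ⟨c, hc⟩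

theorem Xint_le (hpos : ∀ i, 0 < lam i) {x y : ℝ} {i j : Fin k} (hx : x ∈ Xint lam i)
    (hy : y ∈ Xint lam j) (hxy : x ≤ y) : i ≤ j := by
  by_contra! hlt
  have := leftPt_add_le hpos hlt
  linarith [hx.1, hy.2]

theorem Xint_unique (hpos : ∀ i, 0 < lam i) {x : ℝ} {i j : Fin k} (hi : x ∈ Xint lam i)
    (hj : x ∈ Xint lam j) : i = j :=
  (Xint_le hpos hi hj le_rfl).antisymm (Xint_le hpos hj hi le_rfl)

/-- The interior division points. -/
noncomputable def divisionPts (lam : Fin k → ℝ) : Finset ℝ :=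
  (Finset.univ.filter fun i : Fin k => (i : ℕ) ≠ 0).image (leftPt lam)

theorem mem_divisionPts {d : ℝ} :
    d ∈ divisionPts lam ↔ ∃ i : Fin k, (i : ℕ) ≠ 0 ∧ leftPt lam i = d := by
  simp [divisionPts]

theorem card_divisionPts (hpos : ∀ i, 0 < lam i) (hk : 0 < k) :
    (divisionPts lam).card + 1 = k := by
  unfold divisionPts
  rw [Finset.card_image_of_injective _ (leftPt_strictMono hpos).injective]
  have : (Finset.univ.filter fun i : Fin k => (i : ℕ) ≠ 0) = Finset.univ.erase ⟨0, hk⟩ := by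
    ext i
    simp [Fin.ext_iff]
  rw [this, Finset.card_erase_of_mem (Finset.mem_univ _), Finset.card_univ, Fintype.card_fin]
  omega

theorem Xint_eq_iff (hpos : ∀ i, 0 < lam i) {x y : ℝ} {i j : Fin k} (hx : x ∈ Xint lam i)
    (hy : y ∈ Xint lam j) (hxy : x ≤ y) :
    i = j ↔ ∀ d ∈ divisionPts lam, ¬ (x < d ∧ d ≤ y) := by
  constructor
  · rintro rfl d hd ⟨h1, h2⟩
    obtain ⟨l, -, rfl⟩ := mem_divisionPts.1 hd
    rcases lt_or_ge i l with hlt | hge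
    · have := leftPt_add_le hpos hlt
      linarith [hy.2]
    · have := (leftPt_strictMono hpos).monotone hge
      linarith [hx.1]
  · intro hno
    by_contra hne
    have hlt : i < j := (Xint_le hpos hx hy hxy).lt_of_ne hne
    refine hno _ (mem_divisionPts.2 ⟨j, ?_, rfl⟩) ⟨hx.2.trans_le (leftPt_add_le hpos hlt), hy.1⟩
    rw [Fin.lt_def] at hlt
    omega

namespace IsIET

theorem apply_eq (hT : IsIET lam σ T) {x : ℝ} {i : Fin k} (hx : x ∈ Xint lam i) :
    T x = x + (leftPt (lam ∘ σ) (σ.symm i) - leftPt lam i) :=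
  hT.2.2.1 i x hx

theorem apply_mem_Xint (hT : IsIET lam σ T) {x : ℝ} {i : Fin k} (hx : x ∈ Xint lam i) :
    T x ∈ Xint (lam ∘ σ) (σ.symm i) := by
  rw [hT.apply_eq hx]
  constructor
  · linarith [hx.1]
  · have := hx.2
    simp only [Function.comp_apply, Equiv.apply_symm_apply]
    linarith

theorem comp_pos (hT : IsIET lam σ T) (i : Fin k) : 0 < (lam ∘ σ) i := hT.1 _

theorem comp_sum (hT : IsIET lam σ T) : ∑ i, (lam ∘ σ) i = 1 := by
  rw [← hT.2.1]
  exact Equiv.sum_comp σ lam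

theorem isPiecewiseTranslation (hT : IsIET lam σ T) :
    IsPiecewiseTranslation T (divisionPts lam) where
  mapsTo x hx := by
    obtain ⟨i, hi⟩ := exists_mem_Xint hT.2.1 hx
    exact Xint_subset hT.comp_pos hT.comp_sum _ (hT.apply_mem_Xint hi)
  injOn x hx y hy he := by
    obtain ⟨i, hi⟩ := exists_mem_Xint hT.2.1 hx
    obtain ⟨j, hj⟩ := exists_mem_Xint hT.2.1 hy
    have hij := Xint_unique hT.comp_pos (he ▸ hT.apply_mem_Xint hi) (hT.apply_mem_Xint hj)
    obtain rfl := σ.symm.injective hij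
    rw [hT.apply_eq hi, hT.apply_eq hj] at he
    linarith
  trans x hx y hy hxy hd := by
    obtain ⟨i, hi⟩ := exists_mem_Xint hT.2.1 hx
    obtain ⟨j, hj⟩ := exists_mem_Xint hT.2.1 hy
    obtain rfl := (Xint_eq_iff hT.1 hi hj hxy).2 hd
    rw [hT.apply_eq hi, hT.apply_eq hj]
    ring

theorem exists_isIET (σ : Equiv.Perm (Fin k)) (hpos : ∀ i, 0 < lam i) (hsum : ∑ i, lam i = 1) :
    ∃ T, IsIET lam σ T := by
  classical
  have hex : ∀ x, ∃ y, (∀ i, x ∈ Xint lam i → y = x + transAmt lam σ i) ∧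
      (x ∉ Ico (0:ℝ) 1 → y = x) := by
    intro x
    by_cases hx : x ∈ Ico (0:ℝ) 1
    · obtain ⟨i, hi⟩ := exists_mem_Xint hsum hx
      exact ⟨_, fun j hj => by rw [Xint_unique hpos hj hi], fun h => absurd hx h⟩
    · exact ⟨x, fun i hi => absurd (Xint_subset hpos hsum i hi) hx, fun _ => rfl⟩
  choose T h1 h2 using hex
  exact ⟨T, hpos, hsum, fun i x hx => h1 x i hx, h2⟩

theorem inverse_apply (hT : IsIET lam σ T) {S : ℝ → ℝ} (hS : IsIET (lam ∘ σ) σ.symm S) {x : ℝ}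
    (hx : x ∈ Ico (0:ℝ) 1) : S (T x) = x := by
  obtain ⟨i, hi⟩ := exists_mem_Xint hT.2.1 hx
  have hlam : (lam ∘ σ) ∘ σ.symm = lam := by
    ext j
    simp
  rw [hS.apply_eq (hT.apply_mem_Xint hi), hT.apply_eq hi, hlam, Equiv.symm_symm,
    Equiv.apply_symm_apply]
  ring

theorem exists_inverse (hT : IsIET lam σ T) : ∃ S, IsIET (lam ∘ σ) σ.symm S ∧
    (∀ x ∈ Ico (0:ℝ) 1, S (T x) = x) ∧ ∀ x ∈ Ico (0:ℝ) 1, T (S x) = x := by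
  obtain ⟨S, hS⟩ := exists_isIET σ.symm hT.comp_pos hT.comp_sum
  have hlam : (lam ∘ σ) ∘ σ.symm = lam := by
    ext j
    simp
  refine ⟨S, hS, fun x hx => hT.inverse_apply hS hx, fun x hx => ?_⟩
  exact hS.inverse_apply (by rwa [hlam, Equiv.symm_symm]) hx

theorem apply_leftPt (hT : IsIET lam σ T) (j : Fin k) :
    T (leftPt lam (σ j)) = leftPt (lam ∘ σ) j := by
  rw [hT.apply_eq (leftPt_mem_Xint hT.1 _), Equiv.symm_apply_apply]
  ring

theorem exists_apply_eq_zero (hT : IsIET lam σ T) (hreg : KeaneRegular lam T) (hk : 2 ≤ k) :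
    ∃ i : Fin k, (i : ℕ) ≠ 0 ∧ T (leftPt lam i) = 0 := by
  refine ⟨σ ⟨0, by omega⟩, fun h0 => ?_, ?_⟩
  · have h00 : σ ⟨0, by omega⟩ = ⟨0, by omega⟩ := Fin.ext h0
    have h1 : ((σ ⟨1, by omega⟩ : Fin k) : ℕ) ≠ 0 := by
      intro h1
      have := σ.injective (Fin.ext (h1.trans h0.symm))
      simp at this
    have hT1 : T (leftPt lam (σ ⟨1, by omega⟩)) = leftPt lam ⟨1, by omega⟩ := by
      rw [hT.apply_leftPt, leftPt_succ (i := ⟨0, by omega⟩) rfl,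
        leftPt_succ (i := ⟨0, by omega⟩) (j := ⟨1, by omega⟩) rfl, leftPt_zero rfl,
        leftPt_zero rfl, Function.comp_apply, h00]
    have := hreg 1 _ ⟨1, by omega⟩ h1 (by simp) hT1
    omega
  · rw [hT.apply_leftPt, leftPt_zero rfl]

end IsIET

end IntervalExchange

theorem returnWords_of_subsingleton {A : Type*} [Subsingleton A] {U : ℕ → A} {w : List A} :
    (ReturnWords U w).Finite ∧ (ReturnWords U w).ncard = 1 := by
  have hocc : ∀ i, OccursAt U w i := fun i j => Subsingleton.elim _ _
  have : ReturnWords U w = {[U 0]} := by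
    ext l
    rw [mem_singleton_iff]
    constructor
    · rintro ⟨i, j, -, -, hij, hno, rfl⟩
      have hj : j = i + 1 := by
        by_contra hne
        exact hno (i + 1) (by omega) (by omega) (hocc _)
      subst hj
      refine List.ext_getElem (by simp) fun t _ _ => Subsingleton.elim _ _
    · rintro rfl
      exact ⟨0, 1, hocc _, hocc _, by omega, fun t _ _ => by omega, by simp⟩
  rw [this]
  exact ⟨finite_singleton _, ncard_singleton _⟩

/-- main theorem: the coding of the orbit of any point under a
regular interval exchange transformation on `k` intervals has property `R_k`:
every factor has exactly `k` return words. -/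
theorem regular_iet_coding_has_property_R_k
    (k : ℕ) (lam : Fin k → ℝ) (σ : Equiv.Perm (Fin k)) (T : ℝ → ℝ)
    (hT : IsIET lam σ T) (hreg : KeaneRegular lam T)
    (x : ℝ) (hx : x ∈ Set.Ico (0:ℝ) 1)
    (U : ℕ → Fin k) (hU : IsCoding lam T x U) :
    ∀ w : List (Fin k), IsFactor U w →
      (ReturnWords U w).Finite ∧ (ReturnWords U w).ncard = k := by
  intro w hw
  have hk : 0 < k := (U 0).pos
  rcases Nat.lt_or_ge k 2 with hk2 | hk2
  · obtain rfl : k = 1 := by omega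
    exact returnWords_of_subsingleton
  obtain ⟨c, hc⟩ := exists_coding hk hT.2.1
  obtain ⟨S, hS, hST, hTS⟩ := hT.exists_inverse
  obtain ⟨i₀, hi₀, hTi₀⟩ := hT.exists_apply_eq_zero hreg hk2
  have hP := hT.isPiecewiseTranslation
  have hDI : ∀ d ∈ divisionPts lam, d ∈ Ico (0:ℝ) 1 := by
    intro d hd
    obtain ⟨i, -, rfl⟩ := mem_divisionPts.1 hd
    exact Xint_subset hT.1 hT.2.1 i (leftPt_mem_Xint hT.1 i)
  have hD : ∀ d ∈ divisionPts lam, ∀ n, 1 ≤ n → T^[n] d ∉ divisionPts lam := by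
    intro d hd n hn hd'
    obtain ⟨i, hi, rfl⟩ := mem_divisionPts.1 hd
    obtain ⟨j, hj, he⟩ := mem_divisionPts.1 hd'
    have := (hreg n i j hi hj he.symm).1
    omega
  have hi₀D : leftPt lam i₀ ∈ divisionPts lam := mem_divisionPts.2 ⟨i₀, hi₀, rfl⟩
  have h0 : ∀ n, T^[n] 0 ∉ divisionPts lam := by
    intro n
    rw [← hTi₀, ← Function.iterate_succ_apply]
    exact hD _ hi₀D _ (by omega)
  have h00 : ∀ n, 1 ≤ n → T^[n] 0 ≠ 0 := by
    intro n hn he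
    rw [← hTi₀, ← Function.iterate_succ_apply, Function.iterate_succ_apply'] at he
    have := hP.injOn (hP.iterate_mem (hDI _ hi₀D) n) (hDI _ hi₀D) he
    exact hD _ hi₀D n hn (by rwa [this])
  have hconn : ∀ d ∈ divisionPts (lam ∘ σ), ∀ n, T^[n] d ∉ divisionPts lam := by
    intro d hd n
    obtain ⟨j, -, rfl⟩ := mem_divisionPts.1 hd
    rw [← hT.apply_leftPt, ← Function.iterate_succ_apply]
    by_cases hj : (σ j : ℕ) = 0
    · rw [leftPt_zero hj]
      exact h0 _
    · exact hD _ (mem_divisionPts.2 ⟨_, hj, rfl⟩) _ (by omega)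
  have hcard := card_divisionPts hT.1 hk
  have hres := hP.ncard_returnWords (c := c) (U := U) (w := w)
    (fun x hx y hy hxy => Xint_eq_iff hT.1 (hc x hx) (hc y hy) hxy) hD h0
    (fun y hy => ⟨S y, hS.isPiecewiseTranslation.mapsTo hy, hTS y hy⟩) hDI
    (fun a b ha hab hb => hP.minimal hS.isPiecewiseTranslation hST hTS
      (fun p hp n hn => hP.not_periodic hD h00 hp hn) hconn ha hab hb) hx
    (fun n => Xint_unique hT.1 (hU n) (hc _ (hP.iterate_mem hx n))) hw
  rwa [hcard] at hres
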